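/- The coefficients a_{n,k} defined by p_n(x) = Σ_k a_{n,k} x^{n-2k}, where p_n(x) = Σ_T x^{bor(T)} over left-aligned rook placements T on 2δ_n, are exactly the γ-vector of the (n+1)-st Eulerian polynomial: S_{n+1}(x) = Σ_{k≥0} γ_{n,k} x^k (x+1)^{n-2k} with γ_{n,k} = a_{n,k}; in particular all γ_{n,k} are nonnegative. -/

import Mathlib

/-- Rook placements on the double staircase `2δ_n`: one rook per row (row `i`,
numbered from the top starting at `0`, has `2*(i+1)` cells), at most one rook
per column. -/
def RookPlacement (n : ℕ) :=
  {r : Fin n → Fin (2 * n) //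
    Function.Injective r ∧ ∀ i : Fin n, (r i : ℕ) < 2 * (i.val + 1)}

/-- Column `c` (0-indexed) of the rook placement `R` contains a rook. -/
def Occupied {n : ℕ} (R : RookPlacement n) (c : ℕ) : Prop :=
  ∃ j : Fin n, (R.1 j : ℕ) = c

/-- The number of rooks in block `i` of `R` (block `i` consists of the two
columns `2i` and `2i+1`, 0-indexed). -/
def blockRooks {n : ℕ} (R : RookPlacement n) (i : Fin n) : ℕ :=
  (Finset.univ.filter (fun j : Fin n => (R.1 j : ℕ) / 2 = i.val)).card

/-- `R` is left-aligned: no block has a rook in its right column without a rook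
in its left column. -/
def LeftAligned {n : ℕ} (R : RookPlacement n) : Prop :=
  ∀ i : Fin n, Occupied R (2 * i.val + 1) → Occupied R (2 * i.val)

/-- `R` is right-aligned: no block has a rook in its left column without a rook
in its right column. -/
def RightAligned {n : ℕ} (R : RookPlacement n) : Prop :=
  ∀ i : Fin n, Occupied R (2 * i.val) → Occupied R (2 * i.val + 1)

/-- `bor R` is the number of blocks of `R` containing exactly one rook. -/
def bor {n : ℕ} (R : RookPlacement n) : ℕ :=
  (Finset.univ.filter (fun i : Fin n => blockRooks R i = 1)).card

/-- The one-line word of a permutation of `{1, …, m}` extended by the boundary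
convention `σ_0 = σ_{m+1} = ⋯ = 0`: `permWord σ i = σ_i` for `1 ≤ i ≤ m`
(values in `{1, …, m}`) and `0` otherwise. -/
def permWord {m : ℕ} (σ : Equiv.Perm (Fin m)) : ℕ → ℕ := fun i =>
  if h : 1 ≤ i ∧ i ≤ m then (σ ⟨i - 1, by omega⟩).val + 1 else 0

/-- The number of descents of `σ ∈ S_{m}`: positions `1 ≤ i ≤ m - 1` with
`σ_i > σ_{i+1}`. -/
def desCount {m : ℕ} (σ : Equiv.Perm (Fin m)) : ℕ :=
  ((Finset.Icc 1 (m - 1)).filter (fun i => permWord σ (i + 1) < permWord σ i)).card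

/-- The number of ascents of `σ ∈ S_{m}`: positions `1 ≤ i ≤ m - 1` with
`σ_i < σ_{i+1}`. -/
def ascCount {m : ℕ} (σ : Equiv.Perm (Fin m)) : ℕ :=
  ((Finset.Icc 1 (m - 1)).filter (fun i => permWord σ i < permWord σ (i + 1))).card

/-- `σ ∈ S_m` has no double falls: no position `1 ≤ i ≤ m` with
`σ_{i-1} > σ_i > σ_{i+1}` (with the convention `σ_0 = σ_{m+1} = 0`).
Equivalently, every descent of `σ` is a peak. -/
def NoDoubleFall {m : ℕ} (σ : Equiv.Perm (Fin m)) : Prop :=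
  ∀ i ∈ Finset.Icc 1 m,
    ¬ (permWord σ i < permWord σ (i - 1) ∧ permWord σ (i + 1) < permWord σ i)

/-- `σ ∈ S_m` has no double rises: no position `1 ≤ i ≤ m` with
`σ_{i-1} < σ_i < σ_{i+1}` (with the convention `σ_0 = σ_{m+1} = 0`).
Equivalently, every ascent of `σ` is a valley. -/
def NoDoubleRise {m : ℕ} (σ : Equiv.Perm (Fin m)) : Prop :=
  ∀ i ∈ Finset.Icc 1 m,
    ¬ (permWord σ (i - 1) < permWord σ i ∧ permWord σ i < permWord σ (i + 1))

/-!
Both sides satisfy the same recurrence. Inserting a new largest letter into `σ ∈ S_{n+1}` keeps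
the number of descents at each of the `des σ + 1` places right after a descent or at the end, and
raises it by one at the others, so `S_{n+2} = (1 + (n + 1) x) S_{n+1} + x (1 - x) S_{n+1}'`. Let
a left-aligned placement on `2δ_n` have `d` blocks with two rooks and `b` blocks with one, so that
`b + 2d = n` and `d + 1` blocks of `2δ_{n+1}` are still empty. The rook of a new last row starts
one of these empty blocks or enters one of the `b` single blocks in either column, pushing the
earlier rook to the right if it takes the left one. Hence `x^d (x+1)^b` is replaced by
`(d + 1) x^d (x+1)^(b+1) + 2b x^(d+1) (x+1)^(b-1)`, which is what the Eulerian recurrence makes of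
it. So `S_{n+1} = ∑ x^d (x+1)^b` over left-aligned placements, and the polynomials
`x^k (x+1)^(n-2k)` are linearly independent.
-/

section Permutations

open Finset

variable {m : ℕ}

lemma permWord_zero (σ : Equiv.Perm (Fin m)) : permWord σ 0 = 0 := by
  simp [permWord]

lemma permWord_succ (σ : Equiv.Perm (Fin m)) (i : Fin m) : permWord σ (i + 1) = σ i + 1 := by
  simp [permWord]

lemma permWord_of_lt (σ : Equiv.Perm (Fin m)) {j : ℕ} (h : m < j) : permWord σ j = 0 :=
  dif_neg fun hj => (hj.2.trans_lt h).false

lemma permWord_le (σ : Equiv.Perm (Fin m)) (j : ℕ) : permWord σ j ≤ m := by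
  unfold permWord
  split_ifs <;> omega

/-- The permutation obtained from `σ` by inserting a new largest value at the (0-indexed)
position `p` of its one-line word. -/
def insertMax (p : Fin (m + 1)) (σ : Equiv.Perm (Fin m)) : Equiv.Perm (Fin (m + 1)) :=
  (finSuccEquiv' p).trans ((Equiv.optionCongr σ).trans (finSuccEquiv' (Fin.last m)).symm)

lemma insertMax_self (p : Fin (m + 1)) (σ : Equiv.Perm (Fin m)) :
    insertMax p σ p = Fin.last m := by
  simp [insertMax]

lemma insertMax_succAbove (p : Fin (m + 1)) (σ : Equiv.Perm (Fin m)) (i : Fin m) :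
    insertMax p σ (p.succAbove i) = (σ i).castSucc := by
  simp [insertMax]

lemma insertMax_bijective :
    Function.Bijective fun q : Fin (m + 1) × Equiv.Perm (Fin m) => insertMax q.1 q.2 := by
  refine (Fintype.bijective_iff_injective_and_card _).2
    ⟨?_, by simp [Fintype.card_perm, Nat.factorial_succ]⟩
  rintro ⟨p, σ⟩ ⟨q, τ⟩ (h : insertMax p σ = insertMax q τ)
  obtain rfl : p = q :=
    (insertMax p σ).injective (by rw [insertMax_self, h, insertMax_self])
  congr 1
  ext i
  simpa only [insertMax_succAbove, Fin.ext_iff, Fin.val_castSucc] using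
    DFunLike.congr_fun h (p.succAbove i)

lemma permWord_insertMax (p : Fin (m + 1)) (σ : Equiv.Perm (Fin m)) (j : ℕ) :
    permWord (insertMax p σ) j =
      if j ≤ p then permWord σ j else if j = p + 1 then m + 1 else permWord σ (j - 1) := by
  obtain rfl | ⟨i, rfl⟩ | h : j = 0 ∨ (∃ i : Fin (m + 1), j = i + 1) ∨ m + 1 < j := by
    by_cases h : 1 ≤ j ∧ j ≤ m + 1
    · exact .inr (.inl ⟨⟨j - 1, by omega⟩, by simp; omega⟩)
    · omega
  · simp [permWord_zero]
  · rw [permWord_succ]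
    obtain rfl | ⟨i, rfl⟩ := p.eq_self_or_eq_succAbove i
    · simp [insertMax_self]
    · rw [insertMax_succAbove]
      obtain h | h := Fin.castSucc_lt_or_lt_succ p i
      · rw [Fin.succAbove_of_castSucc_lt _ _ h, if_pos (Nat.succ_le_iff.2 h)]
        exact (permWord_succ σ i).symm
      · have hp : (p : ℕ) < i + 1 := h
        rw [Fin.succAbove_of_lt_succ _ _ h, Fin.val_succ, if_neg (by omega), if_neg (by omega)]
        exact (permWord_succ σ i).symm
  · rw [permWord_of_lt _ h, permWord_of_lt σ (show m < j - 1 by omega), if_neg (by omega),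
      if_neg (by omega)]

lemma desCount_le (σ : Equiv.Perm (Fin (m + 1))) : desCount σ ≤ m :=
  (card_filter_le _ _).trans (by simp)

/-- The positions `1 ≤ i ≤ m` with `σ_i > σ_{i+1}`, under the boundary convention
`σ_{m+1} = 0`: the descents of `σ` together with its last position. -/
def falls (σ : Equiv.Perm (Fin m)) : Finset ℕ :=
  {i ∈ Icc 1 m | permWord σ (i + 1) < permWord σ i}

lemma mem_falls {σ : Equiv.Perm (Fin m)} {i : ℕ} :
    i ∈ falls σ ↔ permWord σ (i + 1) < permWord σ i := by
  simp only [falls, mem_filter, mem_Icc, and_iff_right_iff_imp]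
  intro h
  have hi : permWord σ i ≠ 0 := by omega
  constructor <;> by_contra! hlt
  · exact hi (by rw [Nat.lt_one_iff.1 hlt, permWord_zero])
  · exact hi (permWord_of_lt σ hlt)

lemma card_falls (σ : Equiv.Perm (Fin (m + 1))) : #(falls σ) = desCount σ + 1 := by
  have hlast : permWord σ (m + 1 + 1) < permWord σ (m + 1) := by
    rw [permWord_of_lt σ (Nat.lt_succ_self _)]
    exact (permWord_succ σ (Fin.last m)).symm ▸ Nat.succ_pos _
  rw [falls, ← insert_Icc_right_eq_Icc_add_one (by omega), filter_insert, if_pos hlast,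
    card_insert_of_notMem (by simp)]
  rfl

lemma falls_subset_range (σ : Equiv.Perm (Fin m)) : falls σ ⊆ range (m + 1) := fun _ hi =>
  mem_range_succ_iff.2 (mem_Icc.1 (mem_filter.1 hi).1).2

lemma falls_insertMax (p : Fin (m + 1)) (σ : Equiv.Perm (Fin m)) :
    falls (insertMax p σ) =
      (insert (p : ℕ) (falls σ)).image fun i => if i < (p : ℕ) then i else i + 1 := by
  ext j
  have hp := permWord_le σ p
  have hp' := permWord_le σ (p + 1)
  simp only [mem_image, mem_insert, mem_falls, permWord_insertMax]
  constructor
  · intro h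
    obtain hj | hj | hj : j < p ∨ j = p ∨ (p : ℕ) < j := lt_trichotomy j p
    · exact ⟨j, .inr (by grind), if_pos hj⟩
    · grind
    · exact ⟨j - 1, by grind, by grind⟩
  · rintro ⟨i, rfl | h, rfl⟩ <;> grind

lemma desCount_insertMax (p : Fin (m + 2)) (σ : Equiv.Perm (Fin (m + 1))) :
    desCount (insertMax p σ) = if (p : ℕ) ∈ falls σ then desCount σ else desCount σ + 1 := by
  have hshift : Function.Injective fun i => if i < (p : ℕ) then i else i + 1 := by
    intro a b h
    grind
  have hcard := card_falls (insertMax p σ)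
  rw [falls_insertMax, card_image_of_injective _ hshift, card_insert_eq_ite, card_falls] at hcard
  split_ifs at hcard ⊢ <;> omega

theorem sum_desCount_succ {M : Type*} [AddCommMonoid M] (f : ℕ → M) :
    ∑ τ : Equiv.Perm (Fin (m + 2)), f (desCount τ) =
      ∑ σ : Equiv.Perm (Fin (m + 1)), ((desCount σ + 1) • f (desCount σ) +
        (m + 1 - desCount σ) • f (desCount σ + 1)) := by
  rw [← insertMax_bijective.sum_comp fun τ => f (desCount τ), Fintype.sum_prod_type_right]
  refine sum_congr rfl fun σ _ => ?_
  have hfalls : #{p ∈ range (m + 2) | p ∈ falls σ} = desCount σ + 1 := by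
    rw [filter_mem_eq_inter, inter_eq_right.2 (falls_subset_range σ), card_falls]
  have hrises : #{p ∈ range (m + 2) | p ∉ falls σ} = m + 1 - desCount σ := by
    have := card_filter_add_card_filter_not (s := range (m + 2)) (· ∈ falls σ)
    rw [hfalls, card_range] at this
    omega
  simp only [desCount_insertMax, apply_ite f]
  rw [Fin.sum_univ_eq_sum_range
    (fun p => if p ∈ falls σ then f (desCount σ) else f (desCount σ + 1)), sum_ite, sum_const,
    sum_const, hfalls, hrises]

end Permutations

section EulerianStep

open Polynomial

variable {R : Type*} [CommRing R]

variable (R) in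
/-- The operator `P ↦ (1 + (n + 1) X) P + X (1 - X) P'`, which carries the Eulerian polynomial
`S_{n+1}` to `S_{n+2}`. -/
noncomputable def eulerianStep (n : ℕ) : R[X] →ₗ[R] R[X] :=
  LinearMap.mulLeft R (1 + ((n : R[X]) + 1) * X) +
    LinearMap.mulLeft R (X * (1 - X)) ∘ₗ derivative

lemma eulerianStep_apply (n : ℕ) (P : R[X]) :
    eulerianStep R n P = (1 + ((n : R[X]) + 1) * X) * P + X * (1 - X) * derivative P :=
  rfl

lemma eulerianStep_X_pow {n d : ℕ} (hd : d ≤ n + 1) :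
    eulerianStep R n (X ^ d) = (d + 1) • X ^ d + (n + 1 - d) • X ^ (d + 1) := by
  rw [eulerianStep_apply]
  simp only [nsmul_eq_mul, Nat.cast_sub hd]
  cases d with
  | zero => simp
  | succ d =>
    simp only [derivative_X_pow_succ, Nat.cast_add, Nat.cast_one, map_add, map_natCast, map_one]
    ring

lemma eulerianStep_X_pow_mul_X_add_one_pow (k b : ℕ) :
    eulerianStep R (b + 2 * k) (X ^ k * (X + 1) ^ b) =
      (k + 1) • (X ^ k * (X + 1) ^ (b + 1)) + (2 * b) • (X ^ (k + 1) * (X + 1) ^ (b - 1)) := by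
  rw [eulerianStep_apply]
  cases k <;> cases b <;>
    simp only [derivative_mul, derivative_pow, derivative_X, derivative_one,
      nsmul_eq_mul, map_natCast, Nat.add_sub_cancel, Nat.cast_add, Nat.cast_mul, Nat.cast_one,
      Nat.cast_zero, Nat.cast_ofNat, map_add, map_one, map_zero] <;>
    ring

theorem sum_X_pow_desCount_succ (n : ℕ) :
    ∑ τ : Equiv.Perm (Fin (n + 2)), (X : R[X]) ^ desCount τ =
      eulerianStep R n (∑ σ : Equiv.Perm (Fin (n + 1)), X ^ desCount σ) := by
  rw [sum_desCount_succ, map_sum]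
  exact Finset.sum_congr rfl fun σ _ => (eulerianStep_X_pow ((desCount_le σ).trans n.le_succ)).symm

lemma linearIndependent_X_pow_mul {q : ℕ → R[X]} (hq : ∀ k, (q k).coeff 0 = 1) :
    LinearIndependent R fun k => X ^ k * q k := by
  rw [linearIndependent_iff']
  intro s c h k
  induction k using Nat.strong_induction_on with
  | _ k ih =>
    intro hk
    have hlower : ∀ j ∈ s, j ≠ k → (c j • (X ^ j * q j)).coeff k = 0 := by
      intro j hj hjk
      obtain hlt | hgt := hjk.lt_or_gt
      · rw [ih j hlt hj, zero_smul, coeff_zero]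
      · rw [coeff_smul, coeff_X_pow_mul', if_neg hgt.not_ge, smul_zero]
    have hcoeff := congrArg (coeff · k) h
    rw [finsetSum_coeff, Finset.sum_eq_single_of_mem k hk hlower] at hcoeff
    simpa [coeff_X_pow_mul', hq] using hcoeff

end EulerianStep

section RookPlacements

open Finset

variable {n : ℕ}

lemma card_filter_div_two_mem {N : ℕ} {B : Finset ℕ} (hB : B ⊆ range N) :
    #{c ∈ range (2 * N) | c / 2 ∈ B} = 2 * #B := by
  trans #(B ×ˢ range 2)
  · refine card_bij' (fun c _ => (c / 2, c % 2)) (fun q _ => 2 * q.1 + q.2) ?_ ?_ ?_ ?_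
    · intro c hc
      exact mem_product.2 ⟨(mem_filter.1 hc).2, mem_range.2 (Nat.mod_lt c two_pos)⟩
    · rintro ⟨b, e⟩ hq
      obtain ⟨hb : b ∈ B, he : e ∈ range 2⟩ := mem_product.1 hq
      have hbN := mem_range.1 (hB hb)
      rw [mem_range] at he
      have hdiv : (2 * b + e) / 2 = b := by omega
      exact mem_filter.2 ⟨mem_range.2 (by omega), by rwa [hdiv]⟩
    · intro c _
      exact Nat.div_add_mod c 2
    · rintro ⟨b, e⟩ hq
      have he := mem_range.1 (mem_product.1 hq).2
      simp only [Prod.mk.injEq]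
      omega
  · rw [card_product, card_range, mul_comm]

instance (T : RookPlacement n) (c : ℕ) : Decidable (Occupied T c) :=
  inferInstanceAs (Decidable (∃ j : Fin n, (T.1 j : ℕ) = c))

instance (T : RookPlacement n) : Decidable (LeftAligned T) :=
  inferInstanceAs (Decidable (∀ i : Fin n, Occupied T (2 * i.val + 1) → Occupied T (2 * i.val)))

instance : Fintype (RookPlacement n) :=
  inferInstanceAs (Fintype {r : Fin n → Fin (2 * n) //
    Function.Injective r ∧ ∀ i : Fin n, (r i : ℕ) < 2 * (i.val + 1)})

namespace RookPlacement

/-- The column of the rook in row `i`. -/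
def column (T : RookPlacement n) (i : Fin n) : ℕ :=
  T.1 i

/-- The rook placement whose rook in row `i` stands in column `r i`. -/
def ofColumns (r : Fin n → ℕ) (hinj : Function.Injective r) (hlt : ∀ i, r i < 2 * (i.val + 1)) :
    RookPlacement n :=
  ⟨fun i => ⟨r i, (hlt i).trans_le (by omega)⟩, fun _ _ h => hinj (congrArg Fin.val h), hlt⟩

@[simp]
lemma column_ofColumns (r : Fin n → ℕ) (hinj hlt) : (ofColumns r hinj hlt).column = r :=
  rfl

lemma column_injective (T : RookPlacement n) : Function.Injective T.column :=
  fun _ _ h => T.2.1 (Fin.ext h)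

lemma column_lt (T : RookPlacement n) (i : Fin n) : T.column i < 2 * (i.val + 1) :=
  T.2.2 i

lemma ext_column {T U : RookPlacement n} (h : ∀ i, T.column i = U.column i) : T = U :=
  Subtype.ext (funext fun i => Fin.ext (h i))

instance : Unique (RookPlacement 0) where
  default := ofColumns Fin.elim0 (fun i => i.elim0) fun i => i.elim0
  uniq _ := ext_column fun i => i.elim0

lemma occupied_iff {T : RookPlacement n} {c : ℕ} : Occupied T c ↔ ∃ j, T.column j = c :=
  Iff.rfl

lemma lt_of_occupied {T : RookPlacement n} {c : ℕ} (h : Occupied T c) : c < 2 * n := by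
  obtain ⟨j, rfl⟩ := h
  exact (T.1 j).isLt

lemma leftAligned_iff {T : RookPlacement n} :
    LeftAligned T ↔ ∀ b, Occupied T (2 * b + 1) → Occupied T (2 * b) := by
  refine ⟨fun h b hb => h ⟨b, ?_⟩ hb, fun h i => h i⟩
  have := lt_of_occupied hb
  omega

/-- The blocks with a rook in the left column. -/
def leftBlocks (T : RookPlacement n) : Finset ℕ :=
  {b ∈ range n | Occupied T (2 * b)}

/-- The blocks with a rook in the right column. In a left-aligned placement these are the blocks
with two rooks. -/
def rightBlocks (T : RookPlacement n) : Finset ℕ :=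
  {b ∈ range n | Occupied T (2 * b + 1)}

lemma mem_leftBlocks {T : RookPlacement n} {b : ℕ} :
    b ∈ leftBlocks T ↔ Occupied T (2 * b) := by
  simp only [leftBlocks, mem_filter, mem_range, and_iff_right_iff_imp]
  intro h
  have := lt_of_occupied h
  omega

lemma mem_rightBlocks {T : RookPlacement n} {b : ℕ} :
    b ∈ rightBlocks T ↔ Occupied T (2 * b + 1) := by
  simp only [rightBlocks, mem_filter, mem_range, and_iff_right_iff_imp]
  intro h
  have := lt_of_occupied h
  omega

lemma card_filter_column_eq (T : RookPlacement n) (c : ℕ) :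
    #{j | T.column j = c} = if Occupied T c then 1 else 0 := by
  split_ifs with h
  · obtain ⟨j, rfl⟩ := occupied_iff.1 h
    exact card_eq_one.2 ⟨j, by ext i; simp [T.column_injective.eq_iff]⟩
  · exact card_eq_zero.2 (filter_eq_empty_iff.2 fun j _ hj => h ⟨j, hj⟩)

lemma blockRooks_eq (T : RookPlacement n) (i : Fin n) :
    blockRooks T i = (if Occupied T (2 * i) then 1 else 0) +
      if Occupied T (2 * i + 1) then 1 else 0 := by
  rw [← card_filter_column_eq, ← card_filter_column_eq, ← card_union_of_disjoint, ← filter_or]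
  · exact congrArg card (filter_congr fun j _ => by change T.column j / 2 = i ↔ _; omega)
  · exact disjoint_filter.2 fun j _ h h' => by omega

lemma sum_blockRooks (T : RookPlacement n) : ∑ i, blockRooks T i = n := by
  have hblock (j : Fin n) : (T.1 j : ℕ) / 2 < n := by
    have := (T.1 j).isLt
    omega
  simpa [Fin.ext_iff, blockRooks] using (card_eq_sum_card_fiberwise (s := univ) (t := univ)
    (f := fun j => (⟨(T.1 j : ℕ) / 2, hblock j⟩ : Fin n)) fun _ _ => mem_coe.2 (mem_univ _)).symm

lemma card_leftBlocks_add_card_rightBlocks (T : RookPlacement n) :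
    #(leftBlocks T) + #(rightBlocks T) = n := by
  simp only [leftBlocks, rightBlocks, card_filter, sum_range, ← sum_add_distrib, ← blockRooks_eq,
    sum_blockRooks]

lemma rightBlocks_subset_leftBlocks {T : RookPlacement n} (hT : LeftAligned T) :
    rightBlocks T ⊆ leftBlocks T := fun b hb =>
  mem_leftBlocks.2 (leftAligned_iff.1 hT b (mem_rightBlocks.1 hb))

lemma bor_add_two_mul_card_rightBlocks {T : RookPlacement n} (hT : LeftAligned T) :
    bor T + 2 * #(rightBlocks T) = n := by
  simp only [bor, rightBlocks, card_filter, sum_range, mul_sum, ← sum_add_distrib]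
  refine Eq.trans (sum_congr rfl fun i _ => ?_) (sum_blockRooks T)
  have := leftAligned_iff.1 hT i
  grind [blockRooks_eq]

lemma card_leftBlocks_sdiff_rightBlocks {T : RookPlacement n} (hT : LeftAligned T) :
    #(leftBlocks T \ rightBlocks T) = bor T := by
  have := card_leftBlocks_add_card_rightBlocks T
  have := bor_add_two_mul_card_rightBlocks hT
  rw [card_sdiff_of_subset (rightBlocks_subset_leftBlocks hT)]
  omega

/-- The columns where `insertRook` can place the rook of a new last row: the left column of an
empty block and both columns of a block whose only rook is in the left column. -/
def insertColumns (T : RookPlacement n) : Finset ℕ :=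
  {c ∈ range (2 * (n + 1)) | ¬Occupied T (2 * (c / 2) + 1) ∧
    (c % 2 = 1 → Occupied T (2 * (c / 2)))}

lemma mem_insertColumns {T : RookPlacement n} {c : ℕ} :
    c ∈ insertColumns T ↔ c < 2 * (n + 1) ∧ ¬Occupied T (2 * (c / 2) + 1) ∧
      (c % 2 = 1 → Occupied T (2 * (c / 2))) := by
  simp [insertColumns]

lemma leftBlocks_subset_range (T : RookPlacement n) : leftBlocks T ⊆ range (n + 1) :=
  (filter_subset _ _).trans (range_subset_range.2 n.le_succ)

lemma card_insertColumns_filter_mem_leftBlocks {T : RookPlacement n} (hT : LeftAligned T) :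
    #{c ∈ insertColumns T | c / 2 ∈ leftBlocks T} = 2 * bor T := by
  rw [← card_leftBlocks_sdiff_rightBlocks hT, ← card_filter_div_two_mem
    (sdiff_subset.trans (leftBlocks_subset_range T))]
  congr 1
  ext c
  simp only [mem_filter, mem_insertColumns, mem_leftBlocks, mem_sdiff, mem_rightBlocks, mem_range]
  tauto

lemma card_insertColumns_filter_notMem_leftBlocks {T : RookPlacement n} (hT : LeftAligned T) :
    #{c ∈ insertColumns T | c / 2 ∉ leftBlocks T} = #(rightBlocks T) + 1 := by
  have himage : {c ∈ insertColumns T | c / 2 ∉ leftBlocks T} =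
      (range (n + 1) \ leftBlocks T).image (2 * ·) := by
    ext c
    have := leftAligned_iff.1 hT (c / 2)
    simp only [mem_filter, mem_insertColumns, mem_leftBlocks, mem_image, mem_sdiff, mem_range]
    constructor
    · rintro ⟨⟨hlt, -, hodd⟩, hempty⟩
      have heven : c % 2 ≠ 1 := fun h => hempty (hodd h)
      exact ⟨c / 2, ⟨by omega, hempty⟩, by omega⟩
    · rintro ⟨b, ⟨hlt, hempty⟩, rfl⟩
      grind
  rw [himage, card_image_of_injective _ (mul_right_injective₀ two_ne_zero),
    card_sdiff_of_subset (leftBlocks_subset_range T), card_range]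
  have := card_leftBlocks_add_card_rightBlocks T
  omega

/-- Add a last row with a rook in column `c`, pushing a rook already standing in that column
one step to the right. -/
def insertRook (T : RookPlacement n) (c : ℕ) (hc : c ∈ insertColumns T) :
    RookPlacement (n + 1) :=
  have hfree (i : Fin n) : T.column i ≠ 2 * (c / 2) + 1 := fun hi =>
    (mem_insertColumns.1 hc).2.1 ⟨i, hi⟩
  ofColumns (Fin.snoc (α := fun _ => ℕ) (fun i => if T.column i = c then c + 1 else T.column i) c)
    (by
      refine Fin.snoc_injective_iff.2 ⟨fun i j hij => T.column_injective ?_, ?_⟩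
      · grind
      · rintro ⟨i, hi⟩
        grind)
    (by
      refine Fin.forall_fin_succ'.2 ⟨fun i => ?_, ?_⟩
      · have := hfree i
        have := T.column_lt i
        simp only [Fin.snoc_castSucc, Fin.val_castSucc]
        split_ifs <;> omega
      · simpa using (mem_insertColumns.1 hc).1)

/-- Remove the last row, pushing a rook in the right column of its rook's block back to the left
if the removed rook stood there; this undoes `insertRook`. -/
def removeLast (T : RookPlacement (n + 1)) : RookPlacement n :=
  have hne (i : Fin n) : T.column i.castSucc ≠ T.column (Fin.last n) :=
    T.column_injective.ne (Fin.castSucc_lt_last i).ne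
  ofColumns
    (fun i => if T.column i.castSucc = T.column (Fin.last n) + 1 ∧ T.column (Fin.last n) % 2 = 0
      then T.column (Fin.last n) else T.column i.castSucc)
    (by
      intro i j hij
      refine Fin.castSucc_injective n (T.column_injective ?_)
      grind)
    (by
      intro i
      have : T.column i.castSucc < 2 * (i.val + 1) := T.column_lt i.castSucc
      split_ifs <;> omega)

@[simp]
lemma column_insertRook_castSucc (T : RookPlacement n) (c : ℕ) (hc) (i : Fin n) :
    (insertRook T c hc).column i.castSucc = if T.column i = c then c + 1 else T.column i := by
  simp [insertRook]

@[simp]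
lemma column_insertRook_last (T : RookPlacement n) (c : ℕ) (hc) :
    (insertRook T c hc).column (Fin.last n) = c := by
  simp [insertRook]

@[simp]
lemma column_removeLast (T : RookPlacement (n + 1)) (i : Fin n) :
    (removeLast T).column i =
      if T.column i.castSucc = T.column (Fin.last n) + 1 ∧ T.column (Fin.last n) % 2 = 0
      then T.column (Fin.last n) else T.column i.castSucc :=
  rfl

lemma removeLast_insertRook (T : RookPlacement n) (c : ℕ) (hc) :
    removeLast (insertRook T c hc) = T := by
  refine ext_column fun i => ?_
  have hfree : T.column i ≠ 2 * (c / 2) + 1 := fun hi =>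
    (mem_insertColumns.1 hc).2.1 ⟨i, hi⟩
  simp only [column_removeLast, column_insertRook_castSucc, column_insertRook_last]
  split_ifs <;> omega

lemma insertRook_removeLast (T : RookPlacement (n + 1)) (hc) :
    insertRook (removeLast T) (T.column (Fin.last n)) hc = T := by
  refine ext_column (Fin.forall_fin_succ'.2 ⟨fun i => ?_, ?_⟩)
  · have := T.column_injective.ne (Fin.castSucc_lt_last i).ne
    simp only [column_removeLast, column_insertRook_castSucc]
    split_ifs <;> omega
  · exact column_insertRook_last ..

lemma occupied_insertRook {T : RookPlacement n} {c : ℕ} {hc} {d : ℕ} :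
    Occupied (insertRook T c hc) d ↔
      Occupied T d ∨ d = if Occupied T c then c + 1 else c := by
  have : Occupied (insertRook T c hc) d ↔
      (∃ i, (if T.column i = c then c + 1 else T.column i) = d) ∨ c = d := by
    simp [occupied_iff, Fin.exists_fin_succ']
  rw [this]
  split_ifs with h <;> simp only [occupied_iff] at h ⊢ <;> grind

lemma occupied_removeLast {T : RookPlacement (n + 1)} {d : ℕ} :
    Occupied (removeLast T) d ↔ Occupied T d ∧
      d ≠ if Occupied T (T.column (Fin.last n) + 1) ∧ T.column (Fin.last n) % 2 = 0
        then T.column (Fin.last n) + 1 else T.column (Fin.last n) := by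
  have hne (i : Fin n) : T.column i.castSucc ≠ T.column (Fin.last n) :=
    T.column_injective.ne (Fin.castSucc_lt_last i).ne
  split_ifs with h <;> simp only [occupied_iff, Fin.exists_fin_succ', column_removeLast] at h ⊢ <;>
    grind

lemma leftAligned_insertRook {T : RookPlacement n} (hT : LeftAligned T) {c : ℕ} (hc) :
    LeftAligned (insertRook T c hc) := by
  rw [leftAligned_iff] at hT ⊢
  obtain ⟨-, -, hodd⟩ := mem_insertColumns.1 hc
  intro b
  rw [occupied_insertRook, occupied_insertRook]
  have := hT b
  grind

lemma leftAligned_removeLast {T : RookPlacement (n + 1)} (hT : LeftAligned T) :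
    LeftAligned (removeLast T) := by
  rw [leftAligned_iff] at hT ⊢
  intro b
  rw [occupied_removeLast, occupied_removeLast]
  have := hT b
  grind

lemma column_last_mem_insertColumns {T : RookPlacement (n + 1)} (hT : LeftAligned T) :
    T.column (Fin.last n) ∈ insertColumns (removeLast T) := by
  have hlt : T.column (Fin.last n) < 2 * (n + 1) := T.column_lt (Fin.last n)
  have hocc : Occupied T (T.column (Fin.last n)) := ⟨_, rfl⟩
  have := leftAligned_iff.1 hT (T.column (Fin.last n) / 2)
  rw [mem_insertColumns, occupied_removeLast, occupied_removeLast]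
  grind

lemma rightBlocks_insertRook (T : RookPlacement n) {c : ℕ} (hc : c ∈ insertColumns T) :
    rightBlocks (insertRook T c hc) =
      if c / 2 ∈ leftBlocks T then insert (c / 2) (rightBlocks T) else rightBlocks T := by
  obtain ⟨-, hright, hodd⟩ := mem_insertColumns.1 hc
  ext b
  split_ifs with h <;>
    simp only [mem_leftBlocks, mem_insert, mem_rightBlocks, occupied_insertRook] at h ⊢ <;> grind

lemma card_rightBlocks_insertRook (T : RookPlacement n) {c : ℕ} (hc : c ∈ insertColumns T) :
    #(rightBlocks (insertRook T c hc)) =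
      if c / 2 ∈ leftBlocks T then #(rightBlocks T) + 1 else #(rightBlocks T) := by
  have hright : c / 2 ∉ rightBlocks T := mt mem_rightBlocks.1 (mem_insertColumns.1 hc).2.1
  rw [rightBlocks_insertRook, apply_ite card, card_insert_of_notMem hright]

lemma bor_insertRook {T : RookPlacement n} (hT : LeftAligned T) {c : ℕ}
    (hc : c ∈ insertColumns T) :
    bor (insertRook T c hc) = if c / 2 ∈ leftBlocks T then bor T - 1 else bor T + 1 := by
  have hold := bor_add_two_mul_card_rightBlocks hT
  have hnew := bor_add_two_mul_card_rightBlocks (leftAligned_insertRook hT hc)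
  rw [card_rightBlocks_insertRook] at hnew
  split_ifs at hnew ⊢ <;> omega

lemma sum_leftAligned_eq_sum_insertRook {M : Type*} [AddCommMonoid M]
    (g : RookPlacement (n + 1) → M) :
    ∑ T with LeftAligned T, g T =
      ∑ T with LeftAligned T, ∑ c : insertColumns T, g (insertRook T c c.2) := by
  rw [sum_sigma']
  symm
  refine sum_bij (fun q _ => insertRook q.1 q.2 q.2.2) ?_ ?_ ?_ fun _ _ => rfl
  · intro q hq
    have hleft := (mem_filter.1 (mem_sigma.1 hq).1).2
    exact mem_filter.2 ⟨mem_univ _, leftAligned_insertRook hleft q.2.2⟩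
  · rintro ⟨T, c, hc⟩ _ ⟨U, d, hd⟩ _ (h : insertRook T c hc = insertRook U d hd)
    obtain rfl : T = U := by
      rw [← removeLast_insertRook T c hc, h, removeLast_insertRook]
    obtain rfl : c = d := by
      rw [← column_insertRook_last T c hc, h, column_insertRook_last]
    rfl
  · intro T hT
    have hleft := (mem_filter.1 hT).2
    exact ⟨⟨removeLast T, _, column_last_mem_insertColumns hleft⟩,
      mem_sigma.2 ⟨mem_filter.2 ⟨mem_univ _, leftAligned_removeLast hleft⟩, mem_univ _⟩,
      insertRook_removeLast T _⟩

theorem sum_leftAligned_succ {M : Type*} [AddCommMonoid M] (f : ℕ → ℕ → M) :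
    ∑ T : RookPlacement (n + 1) with LeftAligned T, f #(rightBlocks T) (bor T) =
      ∑ T : RookPlacement n with LeftAligned T,
        ((#(rightBlocks T) + 1) • f #(rightBlocks T) (bor T + 1) +
          (2 * bor T) • f (#(rightBlocks T) + 1) (bor T - 1)) := by
  rw [sum_leftAligned_eq_sum_insertRook]
  refine sum_congr rfl fun T hT => ?_
  have hleft := (mem_filter.1 hT).2
  have hinsert (c : insertColumns T) :
      f #(rightBlocks (insertRook T c c.2)) (bor (insertRook T c c.2)) =
        if (c : ℕ) / 2 ∈ leftBlocks T then f (#(rightBlocks T) + 1) (bor T - 1)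
        else f #(rightBlocks T) (bor T + 1) := by
    rw [card_rightBlocks_insertRook, bor_insertRook hleft]
    split_ifs <;> rfl
  rw [Fintype.sum_congr _ _ hinsert, sum_coe_sort (insertColumns T) fun c =>
      if c / 2 ∈ leftBlocks T then f (#(rightBlocks T) + 1) (bor T - 1)
      else f #(rightBlocks T) (bor T + 1),
    sum_ite, sum_const, sum_const, card_insertColumns_filter_mem_leftBlocks hleft,
    card_insertColumns_filter_notMem_leftBlocks hleft, add_comm]

lemma leftAligned_and_bor_eq_iff {T : RookPlacement n} {k : ℕ} (hk : k ≤ n / 2) :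
    LeftAligned T ∧ bor T = n - 2 * k ↔ LeftAligned T ∧ #(rightBlocks T) = k :=
  and_congr_right fun hT => by
    have := bor_add_two_mul_card_rightBlocks hT
    omega

end RookPlacement

end RookPlacements

section GammaExpansion

open Finset Polynomial RookPlacement

variable {R : Type*} [CommRing R]

theorem sum_X_pow_desCount_eq_sum_leftAligned (n : ℕ) :
    ∑ σ : Equiv.Perm (Fin (n + 1)), (X : R[X]) ^ desCount σ =
      ∑ T : RookPlacement n with LeftAligned T, X ^ #(rightBlocks T) * (X + 1) ^ bor T := by
  induction n with
  | zero =>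
    have hdes (σ : Equiv.Perm (Fin 1)) : desCount σ = 0 := Nat.le_zero.1 (desCount_le σ)
    have hleft (T : RookPlacement 0) : LeftAligned T := fun i => i.elim0
    have hzero (T : RookPlacement 0) : #(rightBlocks T) = 0 ∧ bor T = 0 := by
      have := bor_add_two_mul_card_rightBlocks (hleft T)
      omega
    simp [hdes, hleft, hzero]
  | succ n ih =>
    rw [sum_X_pow_desCount_succ, ih, map_sum, sum_leftAligned_succ fun d b => X ^ d * (X + 1) ^ b]
    refine sum_congr rfl fun T hT => ?_
    rw [← eulerianStep_X_pow_mul_X_add_one_pow,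
      bor_add_two_mul_card_rightBlocks (mem_filter.1 hT).2]

theorem sum_X_pow_desCount_eq_sum_card_smul (n : ℕ) :
    ∑ σ : Equiv.Perm (Fin (n + 1)), (X : R[X]) ^ desCount σ =
      ∑ k ∈ range (n / 2 + 1),
        Nat.card {T : RookPlacement n // LeftAligned T ∧ bor T = n - 2 * k} •
          (X ^ k * (X + 1) ^ (n - 2 * k)) := by
  have hmaps : ∀ T ∈ ({T | LeftAligned T} : Finset (RookPlacement n)),
      #(rightBlocks T) ∈ range (n / 2 + 1) := by
    intro T hT
    have := bor_add_two_mul_card_rightBlocks (mem_filter.1 hT).2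
    exact mem_range.2 (by omega)
  rw [sum_X_pow_desCount_eq_sum_leftAligned, ← sum_fiberwise_of_maps_to hmaps]
  refine sum_congr rfl fun k hk => ?_
  have hk : k ≤ n / 2 := mem_range_succ_iff.1 hk
  rw [Nat.card_eq_fintype_card, Fintype.card_subtype, filter_filter, ← sum_const]
  simp only [leftAligned_and_bor_eq_iff hk]
  refine sum_congr rfl fun T hT => ?_
  obtain ⟨hleft, rfl⟩ := (mem_filter.1 hT).2
  rw [Nat.sub_eq_of_eq_add (bor_add_two_mul_card_rightBlocks hleft).symm]

end GammaExpansion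

open Polynomial in
/-- The coefficients `a_{n,k}` of `p_n(x) = Σ_k a_{n,k} x^{n-2k}` (where
`a_{n,k}` is the number of left-aligned rook placements on `2δ_n` with exactly
`n - 2k` blocks containing one rook) form the γ-vector of the `(n+1)`-st
Eulerian polynomial: if `S_{n+1}(x) = Σ_{k ≤ n/2} γ_k x^k (x+1)^{n-2k}`, then
necessarily `γ_k = a_{n,k}` for all `k ≤ n/2`; in particular all `γ_k` are
nonnegative. -/
theorem gamma_vector_eq_left_aligned_counts (n : ℕ) (γ : ℕ → ℤ)
    (hγ : (∑ σ : Equiv.Perm (Fin (n + 1)), (X : Polynomial ℤ) ^ desCount σ) =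
      ∑ k ∈ Finset.range (n / 2 + 1),
        Polynomial.C (γ k) * X ^ k * (X + 1) ^ (n - 2 * k)) :
    ∀ k ≤ n / 2,
      γ k = (Nat.card {R : RookPlacement n // LeftAligned R ∧ bor R = n - 2 * k} : ℤ) ∧
      0 ≤ γ k := by
  intro k hk
  have hind : LinearIndependent ℤ fun k => (X : ℤ[X]) ^ k * (X + 1) ^ (n - 2 * k) :=
    linearIndependent_X_pow_mul fun k => by simp [coeff_zero_eq_eval_zero]
  simp only [sum_X_pow_desCount_eq_sum_card_smul, ← smul_eq_C_mul, smul_mul_assoc,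
    ← natCast_zsmul] at hγ
  have hγk := linearIndependent_iff'ₛ.1 hind _ _ _ hγ k (Finset.mem_range.2 (by omega))
  exact ⟨hγk.symm, hγk ▸ Nat.cast_nonneg _⟩
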